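/- arXiv:2401.11495 — 2 statements merged into one kernel-verified Lean document; each statement's English description precedes it below -/
import Mathlib

section
/- Suppose φ ∈ L¹(ℝ₊;ℝ₊) with ∫₀^∞ φ = 1 and σ := ∫₀^∞ t φ(t) dt < ∞, and let R be the resolvent of φ. Then 𝓘_R(t) := ∫₀^t R(s)ds satisfies 𝓘_R(t)/t → 1/σ as t → ∞, and 𝓘²_R(t) := ∫₀^t 𝓘_R(s)ds satisfies 𝓘²_R(t)/t² → 1/(2σ) as t → ∞. -/
open MeasureTheory Real Filter Set

/-!
Integrating the resolvent equation once gives `∫₀ᵗ R(s) F(t - s) ds = ∫₀ᵗ φ`, where `F(x) = ∫ₓ^∞ φ`,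
and integrating once more gives `∫₀ᵗ R(s) H(t - s) ds = t - H(t)`, where `H(x) = ∫₀ˣ F` increases
to `σ`. The bound `H ≤ σ` yields `t - σ ≤ σ 𝓘_R(t)`, while the identity at time `t + a`, together
with `H ≥ H(a)` on `[a, ∞)`, yields `H(a) 𝓘_R(t) ≤ t + a`. Taking `a = √t` squeezes `𝓘_R(t)/t`
to `1/σ`, and the second limit follows by averaging.
-/

lemma isLittleO_intervalIntegral_pow {E : Type*} [NormedAddCommGroup E] [NormedSpace ℝ E]
    {f : ℝ → E} {n : ℕ} (hf : ∀ t ≥ 0, IntervalIntegrable f volume 0 t)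
    (hfo : f =o[atTop] fun t => t ^ n) :
    (fun t => ∫ s in (0 : ℝ)..t, f s) =o[atTop] fun t => t ^ (n + 1) := by
  refine Asymptotics.isLittleO_iff.mpr fun ε hε => ?_
  obtain ⟨A, hA, hfA⟩ : ∃ A ≥ 0, ∀ s ≥ A, ‖f s‖ ≤ ε / 2 * ‖s ^ n‖ :=
    (atTop_basis' 0).eventually_iff.mp (Asymptotics.isLittleO_iff.mp hfo (half_pos hε))
  have hhead : ∀ᶠ t : ℝ in atTop, ‖∫ s in (0 : ℝ)..A, f s‖ ≤ ε / 2 * t ^ (n + 1) :=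
    ((tendsto_pow_atTop n.succ_ne_zero).const_mul_atTop (half_pos hε)).eventually_ge_atTop _
  filter_upwards [hhead, eventually_ge_atTop A] with t hhead hAt
  have ht : 0 ≤ t := hA.trans hAt
  have htail : ‖∫ s in A..t, f s‖ ≤ ε / 2 * t ^ n * |t - A| := by
    refine intervalIntegral.norm_integral_le_of_norm_le_const fun s hs => ?_
    rw [uIoc_of_le hAt] at hs
    have hs0 : 0 ≤ s := hA.trans hs.1.le
    refine (hfA s hs.1.le).trans ?_
    rw [norm_of_nonneg (by positivity)]
    gcongr
    exact hs.2
  calc ‖∫ s in (0 : ℝ)..t, f s‖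
      = ‖(∫ s in (0 : ℝ)..A, f s) + ∫ s in A..t, f s‖ := by
        rw [intervalIntegral.integral_add_adjacent_intervals (hf A hA)
          ((hf A hA).symm.trans (hf t ht))]
    _ ≤ ε / 2 * t ^ (n + 1) + ε / 2 * t ^ n * |t - A| := norm_add_le_of_le hhead htail
    _ ≤ ε / 2 * t ^ (n + 1) + ε / 2 * t ^ n * t := by
        gcongr
        rw [abs_of_nonneg (sub_nonneg.mpr hAt)]
        linarith
    _ = ε * ‖t ^ (n + 1)‖ := by rw [norm_of_nonneg (by positivity)]; ring

lemma tendsto_intervalIntegral_div_pow {f : ℝ → ℝ} {c : ℝ} {n : ℕ}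
    (hf : ∀ t ≥ 0, IntervalIntegrable f volume 0 t)
    (hlim : Tendsto (fun t => f t / t ^ n) atTop (nhds c)) :
    Tendsto (fun t => (∫ s in (0 : ℝ)..t, f s) / t ^ (n + 1)) atTop (nhds (c / (n + 1))) := by
  have hcpow (t : ℝ) : IntervalIntegrable (fun s => c * s ^ n) volume 0 t :=
    (by fun_prop : Continuous fun s : ℝ => c * s ^ n).intervalIntegrable 0 t
  have herr : (fun t => f t - c * t ^ n) =o[atTop] fun t => t ^ n := by
    refine Asymptotics.isLittleO_of_tendsto' ?_ ?_
    · filter_upwards [eventually_gt_atTop 0] with t ht h using absurd h (pow_pos ht n).ne'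
    · refine (sub_self c ▸ hlim.sub_const c).congr' ?_
      filter_upwards [eventually_gt_atTop 0] with t ht
      field_simp
  have hint := (isLittleO_intervalIntegral_pow (fun t ht => (hf t ht).sub (hcpow t))
    herr).tendsto_div_nhds_zero
  refine (zero_add (c / (n + 1)) ▸ hint.add_const (c / (n + 1))).congr' ?_
  filter_upwards [eventually_gt_atTop 0] with t ht
  rw [intervalIntegral.integral_sub (hf t ht.le) (hcpow t), intervalIntegral.integral_const_mul,
    integral_pow]
  field_simp
  simp

lemma intervalIntegral_triangle_swap {E : Type*} [NormedAddCommGroup E] [NormedSpace ℝ E]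
    {K : ℝ → ℝ → E} {a b : ℝ} (hab : a ≤ b)
    (hK : IntegrableOn (fun p : ℝ × ℝ => K p.1 p.2) {p | a < p.2 ∧ p.2 ≤ p.1 ∧ p.1 ≤ b}) :
    ∫ u in a..b, ∫ s in a..u, K u s = ∫ s in a..b, ∫ u in s..b, K u s := by
  set Δ : Set (ℝ × ℝ) := {p | a < p.2 ∧ p.2 ≤ p.1 ∧ p.1 ≤ b}
  set K' : ℝ × ℝ → E := Δ.indicator fun p => K p.1 p.2
  have integral_fst_fixed (u : ℝ) :
      ∫ s, K' (u, s) = (Ioc a b).indicator (fun u => ∫ s in a..u, K u s) u := by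
    by_cases hu : u ∈ Ioc a b
    · rw [indicator_of_mem hu, intervalIntegral.integral_of_le hu.1.le,
        ← integral_indicator measurableSet_Ioc]
      congr with s
      simp [K', Δ, indicator, hu.2]
    · have hK' (s : ℝ) : K' (u, s) = 0 :=
        indicator_of_notMem (fun h => hu ⟨h.1.trans_le h.2.1, h.2.2⟩) _
      simp [hK', hu]
  have integral_snd_fixed (s : ℝ) :
      ∫ u, K' (u, s) = (Ioc a b).indicator (fun s => ∫ u in s..b, K u s) s := by
    by_cases hs : s ∈ Ioc a b
    · rw [indicator_of_mem hs, intervalIntegral.integral_of_le hs.2,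
        ← integral_Icc_eq_integral_Ioc, ← integral_indicator measurableSet_Icc]
      congr with u
      simp [K', Δ, indicator, hs.1]
    · have hK' (u : ℝ) : K' (u, s) = 0 :=
        indicator_of_notMem (fun h => hs ⟨h.1, h.2.1.trans h.2.2⟩) _
      simp [hK', hs]
  rw [intervalIntegral.integral_of_le hab, intervalIntegral.integral_of_le hab,
    ← integral_indicator measurableSet_Ioc, ← integral_indicator measurableSet_Ioc]
  simp_rw [← integral_fst_fixed, ← integral_snd_fixed]
  exact integral_integral_swap ((integrable_indicator_iff (by measurability)).mpr hK)

lemma intervalIntegral_convolution {f g : ℝ → ℝ} {T : ℝ} (hT : 0 ≤ T)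
    (hf : IntervalIntegrable f volume 0 T) (hg : IntervalIntegrable g volume 0 T) :
    ∫ u in (0 : ℝ)..T, ∫ s in (0 : ℝ)..u, f s * g (u - s) =
      ∫ s in (0 : ℝ)..T, f s * ∫ r in (0 : ℝ)..(T - s), g r := by
  have hfg : IntegrableOn (fun p : ℝ × ℝ => f p.2 * g (p.1 - p.2))
      {p | 0 < p.2 ∧ p.2 ≤ p.1 ∧ p.1 ≤ T} := by
    rw [intervalIntegrable_iff_integrableOn_Ioc_of_le hT,
      ← integrable_indicator_iff measurableSet_Ioc] at hf
    rw [intervalIntegrable_iff_integrableOn_Icc_of_le hT,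
      ← integrable_indicator_iff measurableSet_Icc] at hg
    have hprod := hf.convolution_integrand (ContinuousLinearMap.mul ℝ ℝ) hg
    refine hprod.integrableOn.congr_fun (fun p hp => ?_) (by measurability)
    obtain ⟨h0, h1, h2⟩ := hp
    have hs : p.2 ∈ Ioc 0 T := ⟨h0, h1.trans h2⟩
    have hus : p.1 - p.2 ∈ Icc 0 T := ⟨by linarith, by linarith⟩
    simp only [indicator_of_mem hs, indicator_of_mem hus, ContinuousLinearMap.mul_apply']
  rw [intervalIntegral_triangle_swap (K := fun u s => f s * g (u - s)) hT hfg]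
  simp only [intervalIntegral.integral_const_mul, intervalIntegral.integral_comp_sub_right,
    sub_self]

/-- The tail mass `∫ₓ^∞ φ` of a density `φ` on the half-line, encoded as the complement of the
distribution function; the two agree when `φ` has unit mass. -/
noncomputable def tailMass (φ : ℝ → ℝ) (x : ℝ) : ℝ := 1 - ∫ s in (0 : ℝ)..x, φ s

/-- The integrated tail `∫₀ˣ ∫_y^∞ φ(s) ds dy` of renewal theory, whose limit at infinity is the
first moment of `φ`. -/
noncomputable def integratedTail (φ : ℝ → ℝ) (x : ℝ) : ℝ := ∫ y in (0 : ℝ)..x, tailMass φ y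

section Tail

variable {φ : ℝ → ℝ} {t : ℝ}

lemma continuousOn_tailMass (hφ : IntervalIntegrable φ volume 0 t) :
    ContinuousOn (tailMass φ) (uIcc 0 t) :=
  continuousOn_const.sub (intervalIntegral.continuousOn_primitive_interval' hφ left_mem_uIcc)

lemma continuousOn_integratedTail (hφ : IntervalIntegrable φ volume 0 t) :
    ContinuousOn (integratedTail φ) (uIcc 0 t) :=
  intervalIntegral.continuousOn_primitive_interval' (continuousOn_tailMass hφ).intervalIntegrable
    left_mem_uIcc

lemma integral_primitive_eq_sub_integratedTail (hφ : IntervalIntegrable φ volume 0 t) :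
    ∫ u in (0 : ℝ)..t, ∫ s in (0 : ℝ)..u, φ s = t - integratedTail φ t := by
  simp_rw [integratedTail, tailMass]
  rw [intervalIntegral.integral_sub intervalIntegrable_const
    (intervalIntegral.continuousOn_primitive_interval' hφ left_mem_uIcc).intervalIntegrable]
  simp

lemma integratedTail_eq (ht : 0 ≤ t) (hφ : IntervalIntegrable φ volume 0 t) :
    integratedTail φ t = t * tailMass φ t + ∫ s in (0 : ℝ)..t, s * φ s := by
  have hprim : ∫ u in (0 : ℝ)..t, ∫ s in (0 : ℝ)..u, φ s = ∫ s in (0 : ℝ)..t, φ s * (t - s) := by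
    simpa using intervalIntegral_convolution ht hφ (intervalIntegrable_const (c := (1 : ℝ)))
  have hsplit : ∫ s in (0 : ℝ)..t, φ s * (t - s) =
      t * (∫ s in (0 : ℝ)..t, φ s) - ∫ s in (0 : ℝ)..t, s * φ s := by
    rw [← intervalIntegral.integral_const_mul, ← intervalIntegral.integral_sub (hφ.const_mul t)
      (hφ.continuousOn_mul (continuousOn_id' _))]
    congr with s
    ring
  rw [integral_primitive_eq_sub_integratedTail hφ, hsplit] at hprim
  rw [tailMass]
  linarith

lemma intervalIntegrable_of_integrableOn_Ioi {f : ℝ → ℝ} {a b : ℝ} (hab : a ≤ b)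
    (hf : IntegrableOn f (Ioi a)) : IntervalIntegrable f volume a b :=
  (intervalIntegrable_iff_integrableOn_Ioc_of_le hab).mpr (hf.mono_set Ioc_subset_Ioi_self)

lemma tailMass_eq_integral_Ioi (ht : 0 ≤ t) (hφ : IntegrableOn φ (Ioi 0))
    (hmass : ∫ s in Ioi (0 : ℝ), φ s = 1) : tailMass φ t = ∫ s in Ioi t, φ s := by
  rw [tailMass, ← hmass, ← intervalIntegral.integral_interval_add_Ioi hφ
    (hφ.mono_set (Ioi_subset_Ioi ht)), add_sub_cancel_left]

lemma tailMass_nonneg (ht : 0 ≤ t) (hnn : ∀ s > 0, 0 ≤ φ s) (hφ : IntegrableOn φ (Ioi 0))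
    (hmass : ∫ s in Ioi (0 : ℝ), φ s = 1) : 0 ≤ tailMass φ t := by
  rw [tailMass_eq_integral_Ioi ht hφ hmass]
  exact setIntegral_nonneg measurableSet_Ioi fun s hs => hnn s (ht.trans_lt hs)

lemma monotoneOn_integratedTail (hnn : ∀ s > 0, 0 ≤ φ s) (hφ : IntegrableOn φ (Ioi 0))
    (hmass : ∫ s in Ioi (0 : ℝ), φ s = 1) : MonotoneOn (integratedTail φ) (Ici 0) := by
  intro x hx y hy hxy
  have htail {t : ℝ} (ht : 0 ≤ t) : IntervalIntegrable (tailMass φ) volume 0 t :=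
    (continuousOn_tailMass (intervalIntegrable_of_integrableOn_Ioi ht hφ)).intervalIntegrable
  rw [← sub_nonneg, integratedTail, integratedTail,
    intervalIntegral.integral_interval_sub_left (htail hy) (htail hx)]
  exact intervalIntegral.integral_nonneg hxy fun u hu =>
    tailMass_nonneg (le_trans hx hu.1) hnn hφ hmass

lemma integratedTail_nonneg (ht : 0 ≤ t) (hnn : ∀ s > 0, 0 ≤ φ s) (hφ : IntegrableOn φ (Ioi 0))
    (hmass : ∫ s in Ioi (0 : ℝ), φ s = 1) : 0 ≤ integratedTail φ t := by
  simpa [integratedTail] using monotoneOn_integratedTail hnn hφ hmass self_mem_Ici ht ht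

lemma integratedTail_le_firstMoment (ht : 0 ≤ t) (hnn : ∀ s > 0, 0 ≤ φ s)
    (hφ : IntegrableOn φ (Ioi 0)) (hmass : ∫ s in Ioi (0 : ℝ), φ s = 1)
    (hmom : IntegrableOn (fun s => s * φ s) (Ioi 0)) :
    integratedTail φ t ≤ ∫ s in Ioi (0 : ℝ), s * φ s := by
  have hsub : Ioi t ⊆ Ioi 0 := Ioi_subset_Ioi ht
  have hmarkov : t * tailMass φ t ≤ ∫ s in Ioi t, s * φ s := by
    rw [tailMass_eq_integral_Ioi ht hφ hmass, ← integral_const_mul]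
    refine setIntegral_mono_on ((hφ.mono_set hsub).const_mul t) (hmom.mono_set hsub)
      measurableSet_Ioi fun s hs => ?_
    exact mul_le_mul_of_nonneg_right (le_of_lt hs) (hnn s (hsub hs))
  rw [integratedTail_eq ht (intervalIntegrable_of_integrableOn_Ioi ht hφ),
    ← intervalIntegral.integral_interval_add_Ioi hmom (hmom.mono_set hsub)]
  linarith

lemma tendsto_integratedTail (hnn : ∀ s > 0, 0 ≤ φ s) (hφ : IntegrableOn φ (Ioi 0))
    (hmass : ∫ s in Ioi (0 : ℝ), φ s = 1) (hmom : IntegrableOn (fun s => s * φ s) (Ioi 0)) :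
    Tendsto (integratedTail φ) atTop (nhds (∫ s in Ioi (0 : ℝ), s * φ s)) := by
  refine tendsto_of_tendsto_of_tendsto_of_le_of_le'
    (intervalIntegral_tendsto_integral_Ioi 0 hmom tendsto_id) tendsto_const_nhds ?_ ?_
  · filter_upwards [eventually_ge_atTop 0] with t ht
    rw [integratedTail_eq ht (intervalIntegrable_of_integrableOn_Ioi ht hφ)]
    exact le_add_of_nonneg_left (mul_nonneg ht (tailMass_nonneg ht hnn hφ hmass))
  · filter_upwards [eventually_ge_atTop 0] with t ht
    exact integratedTail_le_firstMoment ht hnn hφ hmass hmom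

lemma firstMoment_pos (hnn : ∀ s > 0, 0 ≤ φ s) (hpos : 0 < ∫ s in Ioi (0 : ℝ), φ s)
    (hmom : IntegrableOn (fun s => s * φ s) (Ioi 0)) : 0 < ∫ s in Ioi (0 : ℝ), s * φ s := by
  have hφ : IntegrableOn φ (Ioi 0) := .of_integral_ne_zero hpos.ne'
  have hsupp : Function.support (fun s => s * φ s) ∩ Ioi 0 = Function.support φ ∩ Ioi 0 := by
    ext s
    simp +contextual [and_congr_left_iff, LT.lt.ne']
  rw [setIntegral_pos_iff_support_of_nonneg_ae _ hmom, hsupp]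
  · rwa [← setIntegral_pos_iff_support_of_nonneg_ae _ hφ]
    exact ae_restrict_of_forall_mem measurableSet_Ioi hnn
  · exact ae_restrict_of_forall_mem measurableSet_Ioi fun s hs =>
      mul_nonneg (le_of_lt hs) (hnn s hs)

end Tail

/-- `R` is the resolvent of `φ` on the half-line, `R = φ + R * φ`, where the convolution only
involves the values of `R` and `φ` on `[0, ∞)`. -/
def IsResolvent (φ R : ℝ → ℝ) : Prop :=
  ∀ t ≥ (0 : ℝ), R t = φ t + ∫ s in (0 : ℝ)..t, R (t - s) * φ s

lemma intervalIntegrable_mul_comp_sub {f g : ℝ → ℝ} {t : ℝ} (hf : IntervalIntegrable f volume 0 t)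
    (hg : ContinuousOn g (uIcc 0 t)) :
    IntervalIntegrable (fun s => f s * g (t - s)) volume 0 t := by
  refine hf.mul_continuousOn (hg.comp (by fun_prop) fun s hs => ?_)
  change s ∈ (t - ·) ⁻¹' uIcc 0 t
  rwa [preimage_const_sub_uIcc, sub_zero, sub_self, uIcc_comm]

namespace IsResolvent

variable {φ R : ℝ → ℝ} {a t : ℝ}

lemma integral_mul_tailMass (hR : IsResolvent φ R) (ht : 0 ≤ t)
    (hφ_int : IntervalIntegrable φ volume 0 t) (hR_int : IntervalIntegrable R volume 0 t) :
    ∫ s in (0 : ℝ)..t, R s * tailMass φ (t - s) = ∫ s in (0 : ℝ)..t, φ s := by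
  have hconv : ∀ u ∈ uIcc 0 t, R u - φ u = ∫ s in (0 : ℝ)..u, R s * φ (u - s) := by
    intro u hu
    rw [uIcc_of_le ht] at hu
    rw [hR u hu.1, add_sub_cancel_left]
    simpa using intervalIntegral.integral_comp_sub_left (fun s => R s * φ (u - s)) u
      (a := 0) (b := u)
  have honce : (∫ s in (0 : ℝ)..t, R s) - ∫ s in (0 : ℝ)..t, φ s =
      ∫ s in (0 : ℝ)..t, R s * ∫ r in (0 : ℝ)..(t - s), φ r := by
    rw [← intervalIntegral.integral_sub hR_int hφ_int, intervalIntegral.integral_congr hconv,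
      intervalIntegral_convolution ht hR_int hφ_int]
  simp_rw [tailMass, mul_one_sub]
  rw [intervalIntegral.integral_sub hR_int (intervalIntegrable_mul_comp_sub hR_int
    (intervalIntegral.continuousOn_primitive_interval' hφ_int left_mem_uIcc)), ← honce,
    sub_sub_cancel]

lemma integral_mul_integratedTail (hR : IsResolvent φ R) (ht : 0 ≤ t)
    (hφ_int : IntervalIntegrable φ volume 0 t) (hR_int : IntervalIntegrable R volume 0 t) :
    ∫ s in (0 : ℝ)..t, R s * integratedTail φ (t - s) = t - integratedTail φ t := by
  have hinner : ∀ u ∈ uIcc 0 t,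
      ∫ s in (0 : ℝ)..u, R s * tailMass φ (u - s) = ∫ s in (0 : ℝ)..u, φ s := by
    intro u hu
    have hsub : uIcc 0 u ⊆ uIcc 0 t := uIcc_subset_uIcc_left hu
    exact hR.integral_mul_tailMass (uIcc_of_le ht ▸ hu).1 (hφ_int.mono_set hsub)
      (hR_int.mono_set hsub)
  simp_rw [integratedTail]
  rw [← intervalIntegral_convolution ht hR_int (continuousOn_tailMass hφ_int).intervalIntegrable,
    intervalIntegral.integral_congr hinner, integral_primitive_eq_sub_integratedTail hφ_int,
    integratedTail]

lemma sub_firstMoment_le (hR : IsResolvent φ R) (ht : 0 ≤ t) (hφ_nonneg : ∀ s > 0, 0 ≤ φ s)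
    (hφ_int : IntegrableOn φ (Ioi 0)) (hmass : ∫ s in Ioi (0 : ℝ), φ s = 1)
    (hmom : IntegrableOn (fun s => s * φ s) (Ioi 0)) (hR_nonneg : ∀ s ≥ 0, 0 ≤ R s)
    (hR_int : IntervalIntegrable R volume 0 t) :
    t - ∫ s in Ioi (0 : ℝ), s * φ s ≤
      (∫ s in Ioi (0 : ℝ), s * φ s) * ∫ s in (0 : ℝ)..t, R s := by
  set σ := ∫ s in Ioi (0 : ℝ), s * φ s
  have hφ_loc := intervalIntegrable_of_integrableOn_Ioi ht hφ_int
  have hH_le {x : ℝ} (hx : 0 ≤ x) : integratedTail φ x ≤ σ :=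
    integratedTail_le_firstMoment hx hφ_nonneg hφ_int hmass hmom
  calc t - σ ≤ t - integratedTail φ t := sub_le_sub_left (hH_le ht) t
    _ = ∫ s in (0 : ℝ)..t, R s * integratedTail φ (t - s) :=
      (hR.integral_mul_integratedTail ht hφ_loc hR_int).symm
    _ ≤ ∫ s in (0 : ℝ)..t, R s * σ :=
      intervalIntegral.integral_mono_on ht
        (intervalIntegrable_mul_comp_sub hR_int (continuousOn_integratedTail hφ_loc))
        (hR_int.mul_const σ)
        fun s hs => mul_le_mul_of_nonneg_left (hH_le (sub_nonneg.mpr hs.2)) (hR_nonneg s hs.1)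
    _ = σ * ∫ s in (0 : ℝ)..t, R s := by rw [intervalIntegral.integral_mul_const, mul_comm]

lemma integratedTail_mul_integral_le (hR : IsResolvent φ R) (ha : 0 ≤ a) (ht : 0 ≤ t)
    (hφ_nonneg : ∀ s > 0, 0 ≤ φ s) (hφ_int : IntegrableOn φ (Ioi 0))
    (hmass : ∫ s in Ioi (0 : ℝ), φ s = 1) (hR_nonneg : ∀ s ≥ 0, 0 ≤ R s)
    (hR_int : IntervalIntegrable R volume 0 (t + a)) :
    integratedTail φ a * ∫ s in (0 : ℝ)..t, R s ≤ t + a := by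
  have hta : 0 ≤ t + a := add_nonneg ht ha
  have htta : t ≤ t + a := le_add_of_nonneg_right ha
  have hφ_loc := intervalIntegrable_of_integrableOn_Ioi hta hφ_int
  have hsub : uIcc 0 t ⊆ uIcc 0 (t + a) := by
    rw [uIcc_of_le ht, uIcc_of_le hta]
    exact Icc_subset_Icc_right htta
  have hprod_int : IntervalIntegrable (fun s => R s * integratedTail φ (t + a - s)) volume
      0 (t + a) :=
    intervalIntegrable_mul_comp_sub hR_int (continuousOn_integratedTail hφ_loc)
  have hH_nonneg {x : ℝ} (hx : 0 ≤ x) : 0 ≤ integratedTail φ x :=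
    integratedTail_nonneg hx hφ_nonneg hφ_int hmass
  calc integratedTail φ a * ∫ s in (0 : ℝ)..t, R s
      = ∫ s in (0 : ℝ)..t, R s * integratedTail φ a := by
        rw [intervalIntegral.integral_mul_const, mul_comm]
    _ ≤ ∫ s in (0 : ℝ)..t, R s * integratedTail φ (t + a - s) := by
        refine intervalIntegral.integral_mono_on ht ((hR_int.mono_set hsub).mul_const _)
          (hprod_int.mono_set hsub) fun s hs => ?_
        have has : a ≤ t + a - s := by linarith [hs.2]
        exact mul_le_mul_of_nonneg_left (monotoneOn_integratedTail hφ_nonneg hφ_int hmass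
          ha (ha.trans has) has) (hR_nonneg s hs.1)
    _ ≤ ∫ s in (0 : ℝ)..(t + a), R s * integratedTail φ (t + a - s) := by
        refine intervalIntegral.integral_mono_interval le_rfl ht htta ?_ hprod_int
        refine ae_restrict_of_forall_mem measurableSet_Ioc fun s hs => ?_
        exact mul_nonneg (hR_nonneg s hs.1.le) (hH_nonneg (sub_nonneg.mpr hs.2))
    _ = t + a - integratedTail φ (t + a) := hR.integral_mul_integratedTail hta hφ_loc hR_int
    _ ≤ t + a := sub_le_self _ (hH_nonneg hta)

lemma tendsto_integral_div (hR : IsResolvent φ R) (hφ_nonneg : ∀ s > 0, 0 ≤ φ s)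
    (hφ_int : IntegrableOn φ (Ioi 0)) (hmass : ∫ s in Ioi (0 : ℝ), φ s = 1)
    (hmom : IntegrableOn (fun s => s * φ s) (Ioi 0)) (hR_nonneg : ∀ s ≥ 0, 0 ≤ R s)
    (hR_int : ∀ t ≥ 0, IntervalIntegrable R volume 0 t) :
    Tendsto (fun t => (∫ s in (0 : ℝ)..t, R s) / t) atTop
      (nhds (1 / ∫ s in Ioi (0 : ℝ), s * φ s)) := by
  set σ := ∫ s in Ioi (0 : ℝ), s * φ s
  have hσ : 0 < σ := firstMoment_pos hφ_nonneg (hmass ▸ one_pos) hmom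
  have hH : Tendsto (fun t => integratedTail φ √t) atTop (nhds σ) :=
    (tendsto_integratedTail hφ_nonneg hφ_int hmass hmom).comp tendsto_sqrt_atTop
  have hlower : Tendsto (fun t => (1 - σ / t) / σ) atTop (nhds (1 / σ)) := by
    have hdiv : Tendsto (fun t => σ / t) atTop (nhds 0) := tendsto_const_nhds.div_atTop tendsto_id
    simpa using (hdiv.const_sub 1).div_const σ
  have hupper : Tendsto (fun t => (1 + 1 / √t) / integratedTail φ √t) atTop (nhds (1 / σ)) := by
    have hdiv : Tendsto (fun t => 1 / √t) atTop (nhds 0) :=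
      tendsto_const_nhds.div_atTop tendsto_sqrt_atTop
    simpa only [add_zero] using! (hdiv.const_add 1).div hH hσ.ne'
  refine tendsto_of_tendsto_of_tendsto_of_le_of_le' hlower hupper ?_ ?_
  · filter_upwards [eventually_gt_atTop 0] with t ht
    have hbound := hR.sub_firstMoment_le ht.le hφ_nonneg hφ_int hmass hmom hR_nonneg
      (hR_int t ht.le)
    rw [div_le_div_iff₀ hσ ht, sub_mul, div_mul_cancel₀ _ ht.ne']
    linarith
  · filter_upwards [eventually_gt_atTop 0, hH.eventually_const_lt hσ] with t ht hHt
    have hbound := hR.integratedTail_mul_integral_le (sqrt_nonneg t) ht.le hφ_nonneg hφ_int hmass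
      hR_nonneg (hR_int _ (by positivity))
    have hsqrt : (1 + 1 / √t) * t = t + √t := by
      rw [add_mul, one_mul, div_mul_eq_mul_div, one_mul, div_sqrt]
    rw [div_le_div_iff₀ ht hHt, hsqrt]
    linarith

end IsResolvent

/-- Weakly critical asymptotics of the integrated resolvent: if `∫₀^∞ φ = 1` and
`σ = ∫₀^∞ tφ(t)dt < ∞`, then `𝓘_R(t)/t → 1/σ` and `𝓘²_R(t)/t² → 1/(2σ)` as `t → ∞`. -/
theorem integrated_resolvent_critical_asymptotics
    (φ R : ℝ → ℝ) (σ : ℝ)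
    (hφ_nonneg : ∀ t, 0 ≤ φ t)
    (hφ_int : IntegrableOn φ (Set.Ioi 0))
    (hmass : (∫ t in Set.Ioi (0:ℝ), φ t) = 1)
    (hmom_int : IntegrableOn (fun t => t * φ t) (Set.Ioi 0))
    (hσ : σ = ∫ t in Set.Ioi (0:ℝ), t * φ t)
    (hR_nonneg : ∀ t, 0 ≤ R t)
    (hR_loc : LocallyIntegrableOn R (Set.Ici 0))
    (hres : ∀ t ≥ (0:ℝ), R t = φ t + ∫ s in (0:ℝ)..t, R (t - s) * φ s) :
    Tendsto (fun t => (∫ s in (0:ℝ)..t, R s) / t) atTop (nhds (1/σ))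
    ∧ Tendsto (fun t => (∫ s in (0:ℝ)..t, ∫ r in (0:ℝ)..s, R r) / t^2) atTop (nhds (1/(2*σ))) := by
  have hR_int : ∀ t ≥ 0, IntervalIntegrable R volume 0 t := fun t ht =>
    (hR_loc.integrableOn_compact_subset (uIcc_of_le ht ▸ Icc_subset_Ici_self)
      isCompact_uIcc).intervalIntegrable
  have hfirst : Tendsto (fun t => (∫ s in (0:ℝ)..t, R s) / t) atTop (nhds (1/σ)) :=
    hσ ▸ IsResolvent.tendsto_integral_div hres (fun s _ => hφ_nonneg s) hφ_int hmass hmom_int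
      (fun s _ => hR_nonneg s) hR_int
  have hprimitive_int : ∀ t ≥ 0,
      IntervalIntegrable (fun t => ∫ s in (0:ℝ)..t, R s) volume 0 t := fun t ht =>
    (intervalIntegral.continuousOn_primitive_interval' (hR_int t ht)
      left_mem_uIcc).intervalIntegrable
  refine ⟨hfirst, ?_⟩
  have hsecond := tendsto_intervalIntegral_div_pow (n := 1) hprimitive_int (by simpa only [pow_one])
  simpa only [Nat.cast_one, one_add_one_eq_two, div_div, mul_comm σ] using hsecond
end

section
/- For α ∈ (0,1) and β > 0, let f^{α,β}(t) = βt^{α-1}E_{α,α}(−βt^α) be the Mittag-Leffler density, whose Laplace transform is ∫₀^∞ e^{-λt}f^{α,β}(t)dt = β/(β+λ^α). If φ = f^{α,β}, then the resolvent R of φ satisfies ∫₀^t R(s)ds = β t^α / Γ(α+1) and ∫₀^t ∫₀^{s} R(r)dr ds = β t^{α+1}/Γ(α+2) for all t ≥ 0. -/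
open MeasureTheory Real Filter Set

/-- The two-parameter Mittag-Leffler function `E_{a,κ}(z) = Σ_k z^k/Γ(κ+ka)`. -/
noncomputable def mittagLeffler (a κ z : ℝ) : ℝ :=
  ∑' k : ℕ, z ^ k / Real.Gamma (κ + k * a)

/-!
The kernel `k t = β t^(α-1)/Γ(α)` convolves with `t^(κ-1)/Γ(κ)` to `β t^(κ+α-1)/Γ(κ+α)`, so summing
the Mittag-Leffler series termwise gives `φ = k - φ * k`, i.e. `k = φ + φ * k`: the resolvent of `φ`
is `k` itself. A Volterra equation has only one locally integrable solution, because under the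
weight `exp (-l t)` with `l` large the truncated kernel has mass less than one; hence `R = k` almost
everywhere, and `R` integrates like a power. The Laplace transform of `φ` comes from integrating
`φ = k - φ * k` against `exp (-l t)`, which is legitimate because `0 < φ ≤ k`.
-/

/-! ### Volterra convolution equations -/

/-- The convolution `(f * g) t = ∫₀ᵗ f s g (t - s) ds` of functions on the half-line. -/
noncomputable def volterraConv (f g : ℝ → ℝ) (t : ℝ) : ℝ :=
  ∫ s in (0 : ℝ)..t, f s * g (t - s)

lemma volterraConv_congr {f₁ f₂ g₁ g₂ : ℝ → ℝ} {t : ℝ} (ht : 0 ≤ t)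
    (hf : ∀ s ∈ Ioo 0 t, f₁ s = f₂ s) (hg : ∀ s ∈ Ioo 0 t, g₁ s = g₂ s) :
    volterraConv f₁ g₁ t = volterraConv f₂ g₂ t := by
  simp only [volterraConv, intervalIntegral.integral_of_le ht, integral_Ioc_eq_integral_Ioo]
  refine setIntegral_congr_fun measurableSet_Ioo fun s hs => ?_
  simp only [hf s hs, hg (t - s) ⟨sub_pos.2 hs.2, sub_lt_self t hs.1⟩]

lemma volterraConv_const_mul (c : ℝ) (f g : ℝ → ℝ) (t : ℝ) :
    volterraConv (fun s => c * f s) g t = c * volterraConv f g t := by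
  simp only [volterraConv, mul_assoc, intervalIntegral.integral_const_mul]

lemma hasSum_volterraConv {f : ℕ → ℝ → ℝ} {g : ℝ → ℝ} {t : ℝ} (ht : 0 ≤ t)
    (hint : ∀ k, IntervalIntegrable (fun s => f k s * g (t - s)) volume 0 t)
    (hsum : Summable fun k => volterraConv (|f k ·|) (|g ·|) t) :
    HasSum (fun k => volterraConv (f k) g t) (volterraConv (fun s => ∑' k, f k s) g t) := by
  simp only [volterraConv, ← abs_mul, ← tsum_mul_right,
    intervalIntegral.integral_of_le ht] at hsum ⊢
  exact hasSum_integral_of_summable_integral_norm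
    (fun k => (intervalIntegrable_iff_integrableOn_Ioc_of_le ht).1 (hint k)) hsum

lemma volterraConv_nonneg {f g : ℝ → ℝ} {t : ℝ} (ht : 0 ≤ t)
    (hf : ∀ s ∈ Ioo 0 t, 0 ≤ f s) (hg : ∀ s ∈ Ioo 0 t, 0 ≤ g s) : 0 ≤ volterraConv f g t := by
  rw [volterraConv, intervalIntegral.integral_of_le ht, integral_Ioc_eq_integral_Ioo]
  exact setIntegral_nonneg measurableSet_Ioo fun s hs =>
    mul_nonneg (hf s hs) (hg (t - s) ⟨sub_pos.2 hs.2, sub_lt_self t hs.1⟩)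

lemma volterraConv_exp_mul (f g : ℝ → ℝ) (l t : ℝ) :
    volterraConv (fun s => exp (-l * s) * f s) (fun s => exp (-l * s) * g s) t
      = exp (-l * t) * volterraConv f g t := by
  rw [volterraConv, volterraConv, ← intervalIntegral.integral_const_mul]
  congr 1 with s
  rw [mul_mul_mul_comm, ← exp_add, show -l * s + -l * (t - s) = -l * t by ring]

lemma integrableOn_volterraConv {f g : ℝ → ℝ} (hf : IntegrableOn f (Ioi 0))
    (hg : IntegrableOn g (Ioi 0)) : IntegrableOn (volterraConv f g) (Ioi 0) :=
  (integrable_indicator_iff measurableSet_Ioi).1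
    (integrable_posConvolution hf hg (ContinuousLinearMap.mul ℝ ℝ))

lemma integral_volterraConv {f g : ℝ → ℝ} (hf : IntegrableOn f (Ioi 0))
    (hg : IntegrableOn g (Ioi 0)) :
    ∫ t in Ioi 0, volterraConv f g t = (∫ t in Ioi 0, f t) * ∫ t in Ioi 0, g t :=
  integral_posConvolution hf hg (ContinuousLinearMap.mul ℝ ℝ)

lemma integral_exp_neg_mul_of_eq_sub_volterraConv {φ k : ℝ → ℝ} {l : ℝ}
    (hφ : IntegrableOn (fun t => exp (-l * t) * φ t) (Ioi 0))
    (hk : IntegrableOn (fun t => exp (-l * t) * k t) (Ioi 0))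
    (hres : ∀ t > 0, φ t = k t - volterraConv φ k t) :
    (∫ t in Ioi 0, exp (-l * t) * φ t) * (1 + ∫ t in Ioi 0, exp (-l * t) * k t)
      = ∫ t in Ioi 0, exp (-l * t) * k t := by
  have hconv : ∫ t in Ioi 0, exp (-l * t) * volterraConv φ k t
      = (∫ t in Ioi 0, exp (-l * t) * k t) - ∫ t in Ioi 0, exp (-l * t) * φ t := by
    rw [← integral_sub hk hφ]
    refine setIntegral_congr_fun measurableSet_Ioi fun t ht => ?_
    simp only [hres t ht]
    ring
  simp_rw [← volterraConv_exp_mul] at hconv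
  rw [integral_volterraConv hφ hk] at hconv
  linear_combination hconv

lemma ae_restrict_Ioi_of_forall_Ioc {p : ℝ → Prop}
    (h : ∀ n : ℕ, ∀ᵐ t ∂volume.restrict (Ioc 0 (n : ℝ)), p t) :
    ∀ᵐ t ∂volume.restrict (Ioi (0 : ℝ)), p t := by
  rw [← iUnion_Ioc_eq_Ioi_self_iff.2 fun (x : ℝ) _ => exists_nat_ge x]
  exact (ae_restrict_iUnion_iff _ _).2 h

lemma integrable_indicator_Ioc {f : ℝ → ℝ} (hf : LocallyIntegrableOn f (Ici 0)) (T : ℝ) :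
    Integrable ((Ioc 0 T).indicator f) :=
  ((hf.integrableOn_compact_subset Icc_subset_Ici_self isCompact_Icc).mono_set
    Ioc_subset_Icc_self).integrable_indicator measurableSet_Ioc

lemma ae_intervalIntegrable_volterraConv {f g : ℝ → ℝ} (hf : LocallyIntegrableOn f (Ici 0))
    (hg : LocallyIntegrableOn g (Ici 0)) :
    ∀ᵐ t ∂volume.restrict (Ioi 0), IntervalIntegrable (fun s => f s * g (t - s)) volume 0 t := by
  refine ae_restrict_Ioi_of_forall_Ioc fun n => ?_
  have hexists := (integrable_indicator_Ioc hf n).ae_convolution_exists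
    (ContinuousLinearMap.mul ℝ ℝ) (integrable_indicator_Ioc hg n)
  filter_upwards [ae_restrict_of_ae hexists, ae_restrict_mem measurableSet_Ioc] with t hconv ht
  rw [intervalIntegrable_iff_integrableOn_Ioo_of_le ht.1.le]
  refine hconv.integrableOn.congr_fun (fun s hs => ?_) measurableSet_Ioo
  have hs' : s ∈ Ioc 0 (n : ℝ) := ⟨hs.1, hs.2.le.trans ht.2⟩
  have hts : t - s ∈ Ioc 0 (n : ℝ) := ⟨sub_pos.2 hs.2, (sub_lt_self t hs.1).le.trans ht.2⟩
  simp only [ContinuousLinearMap.mul_apply', indicator_of_mem hs', indicator_of_mem hts]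

lemma norm_exp_neg_mul_le_one {l t : ℝ} (hl : 0 ≤ l) (ht : 0 ≤ t) : ‖exp (-l * t)‖ ≤ 1 := by
  rw [norm_of_nonneg (exp_pos _).le, exp_le_one_iff, neg_mul, neg_nonpos]
  exact mul_nonneg hl ht

lemma tendsto_integral_exp_neg_mul_atTop {f : ℝ → ℝ} (hf : IntegrableOn f (Ioi 0)) :
    Tendsto (fun l => ∫ t in Ioi 0, exp (-l * t) * f t) atTop (nhds 0) := by
  have hlim : Tendsto (fun l => ∫ t in Ioi 0, exp (-l * t) * f t) atTop
      (nhds (∫ _ in Ioi (0 : ℝ), 0)) := by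
    refine tendsto_integral_filter_of_dominated_convergence (fun t => ‖f t‖)
      (Eventually.of_forall fun l => ?_) ?_ hf.norm ?_
    · exact (by fun_prop : Continuous fun t : ℝ => exp (-l * t)).aestronglyMeasurable.mul
        hf.aestronglyMeasurable
    · filter_upwards [eventually_ge_atTop 0] with l hl
      filter_upwards [ae_restrict_mem measurableSet_Ioi] with t ht
      rw [norm_mul]
      exact mul_le_of_le_one_left (norm_nonneg _) (norm_exp_neg_mul_le_one hl (le_of_lt ht))
    · filter_upwards [ae_restrict_mem measurableSet_Ioi] with t ht
      have hexp : Tendsto (fun l : ℝ => exp (-l * t)) atTop (nhds 0) :=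
        tendsto_exp_atBot.comp (tendsto_neg_atTop_atBot.atBot_mul_const ht)
      simpa using hexp.mul_const (f t)
  simpa using hlim

lemma integrableOn_exp_neg_mul {f : ℝ → ℝ} {l : ℝ} (hl : 0 ≤ l) (hf : IntegrableOn f (Ioi 0)) :
    IntegrableOn (fun t => exp (-l * t) * f t) (Ioi 0) := by
  refine hf.bdd_mul (c := 1) (by fun_prop) ?_
  filter_upwards [ae_restrict_mem measurableSet_Ioi] with t ht
  exact norm_exp_neg_mul_le_one hl (le_of_lt ht)

lemma ae_eq_zero_of_le_volterraConv {f u : ℝ → ℝ} (hf : IntegrableOn f (Ioi 0))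
    (hf_lt : ∫ t in Ioi 0, f t < 1) (hu : IntegrableOn u (Ioi 0)) (hu_nonneg : 0 ≤ u)
    (hle : ∀ᵐ t ∂volume.restrict (Ioi 0), u t ≤ volterraConv f u t) :
    u =ᵐ[volume.restrict (Ioi 0)] 0 := by
  have hint := integral_mono_ae hu (integrableOn_volterraConv hf hu) hle
  rw [integral_volterraConv hf hu] at hint
  have hnonneg : 0 ≤ ∫ t in Ioi 0, u t := integral_nonneg hu_nonneg
  exact (integral_eq_zero_iff_of_nonneg hu_nonneg hu).1 (by nlinarith)

lemma ae_eq_zero_of_abs_le_volterraConv {φ d : ℝ → ℝ} (hφ : LocallyIntegrableOn φ (Ici 0))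
    (hd : LocallyIntegrableOn d (Ici 0))
    (hle : ∀ᵐ t ∂volume.restrict (Ioi 0), |d t| ≤ volterraConv (|φ ·|) (|d ·|) t) :
    d =ᵐ[volume.restrict (Ioi 0)] 0 := by
  refine ae_restrict_Ioi_of_forall_Ioc fun n => ?_
  set f : ℝ → ℝ := (Ioc 0 (n : ℝ)).indicator (|φ ·|)
  set u : ℝ → ℝ := (Ioc 0 (n : ℝ)).indicator (|d ·|)
  have hf : IntegrableOn f (Ioi 0) := (integrable_indicator_Ioc hφ.norm n).integrableOn
  have hu : IntegrableOn u (Ioi 0) := (integrable_indicator_Ioc hd.norm n).integrableOn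
  have hf_nonneg : 0 ≤ f := indicator_nonneg fun _ _ => abs_nonneg _
  have hu_nonneg : 0 ≤ u := indicator_nonneg fun _ _ => abs_nonneg _
  have hu_le : ∀ᵐ t ∂volume.restrict (Ioi 0), u t ≤ volterraConv f u t := by
    filter_upwards [hle, ae_restrict_mem measurableSet_Ioi] with t hdt ht
    by_cases htn : t ≤ n
    · have hmem : ∀ s ∈ Ioo 0 t, s ∈ Ioc 0 (n : ℝ) := fun s hs => ⟨hs.1, hs.2.le.trans htn⟩
      rw [volterraConv_congr (le_of_lt ht) (fun s hs => indicator_of_mem (hmem s hs) _)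
        (fun s hs => indicator_of_mem (hmem s hs) _)]
      exact (indicator_of_mem (show t ∈ Ioc 0 (n : ℝ) from ⟨ht, htn⟩) _).trans_le hdt
    · rw [show u t = 0 from indicator_of_notMem (fun h => htn h.2) _]
      exact volterraConv_nonneg (le_of_lt ht) (fun s _ => hf_nonneg s) fun s _ => hu_nonneg s
  obtain ⟨l, hl_lt, hl⟩ := (((tendsto_integral_exp_neg_mul_atTop hf).eventually_lt_const
    one_pos).and (eventually_ge_atTop 0)).exists
  have hzero := ae_eq_zero_of_le_volterraConv (integrableOn_exp_neg_mul hl hf) hl_lt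
    (integrableOn_exp_neg_mul hl hu) (fun t => mul_nonneg (exp_pos _).le (hu_nonneg t)) <| by
      filter_upwards [hu_le] with t hut
      rw [volterraConv_exp_mul]
      gcongr
  filter_upwards [ae_restrict_of_ae_restrict_of_subset Ioc_subset_Ioi_self hzero,
    ae_restrict_mem measurableSet_Ioc] with t hut ht
  simpa [u, indicator_of_mem ht] using hut

theorem ae_eq_of_eq_add_volterraConv {φ g R₁ R₂ : ℝ → ℝ} (hφ : LocallyIntegrableOn φ (Ici 0))
    (hR₁ : LocallyIntegrableOn R₁ (Ici 0)) (hR₂ : LocallyIntegrableOn R₂ (Ici 0))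
    (h₁ : ∀ᵐ t ∂volume.restrict (Ioi 0), R₁ t = g t + volterraConv φ R₁ t)
    (h₂ : ∀ᵐ t ∂volume.restrict (Ioi 0), R₂ t = g t + volterraConv φ R₂ t) :
    R₁ =ᵐ[volume.restrict (Ioi 0)] R₂ := by
  suffices hdiff : R₁ - R₂ =ᵐ[volume.restrict (Ioi 0)] 0 by
    filter_upwards [hdiff] with t ht using sub_eq_zero.1 ht
  refine ae_eq_zero_of_abs_le_volterraConv hφ (hR₁.sub hR₂) ?_
  filter_upwards [h₁, h₂, ae_intervalIntegrable_volterraConv hφ hR₁,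
    ae_intervalIntegrable_volterraConv hφ hR₂, ae_restrict_mem measurableSet_Ioi]
    with t ht₁ ht₂ hint₁ hint₂ ht
  calc |(R₁ - R₂) t| = |∫ s in (0 : ℝ)..t, φ s * (R₁ - R₂) (t - s)| := by
        simp only [Pi.sub_apply, mul_sub]
        rw [intervalIntegral.integral_sub hint₁ hint₂, ht₁, ht₂, add_sub_add_left_eq_sub]
        rfl
    _ ≤ ∫ s in (0 : ℝ)..t, |φ s * (R₁ - R₂) (t - s)| :=
        intervalIntegral.abs_integral_le_integral_abs (le_of_lt ht)
    _ = volterraConv (|φ ·|) (|(R₁ - R₂) ·|) t := by simp only [volterraConv, abs_mul]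

/-! ### Positivity for log-convex kernels -/

lemma exists_first_nonpos {φ : ℝ → ℝ} (hφ : ContinuousOn φ (Ioi 0))
    (hφ_pos : ∀ᶠ t in nhdsWithin 0 (Ioi 0), 0 < φ t) {t₁ : ℝ} (ht₁ : 0 < t₁) (hφt₁ : φ t₁ ≤ 0) :
    ∃ t₀ > 0, φ t₀ ≤ 0 ∧ ∀ s ∈ Ioo 0 t₀, 0 < φ s := by
  obtain ⟨ε, hε, hφε⟩ := mem_nhdsGT_iff_exists_Ioo_subset.1 hφ_pos
  have hεt₁ : ε ≤ t₁ := not_lt.1 fun h => (hφε ⟨ht₁, h⟩).not_ge hφt₁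
  have hcompact : IsCompact (Icc ε t₁ ∩ φ ⁻¹' Iic 0) :=
    have hφ_Icc : ContinuousOn φ (Icc ε t₁) := hφ.mono fun _ hs => lt_of_lt_of_le hε hs.1
    isCompact_Icc.of_isClosed_subset
      (hφ_Icc.preimage_isClosed_of_isClosed isClosed_Icc isClosed_Iic) inter_subset_left
  obtain ⟨t₀, ⟨ht₀, hφt₀⟩, hleast⟩ :=
    hcompact.exists_isLeast ⟨t₁, right_mem_Icc.2 hεt₁, hφt₁⟩
  refine ⟨t₀, lt_of_lt_of_le hε ht₀.1, hφt₀, fun s hs => ?_⟩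
  by_contra! hφs
  have hεs : ε ≤ s := not_lt.1 fun h => (hφε ⟨hs.1, h⟩).not_ge hφs
  exact (hleast ⟨⟨hεs, hs.2.le.trans ht₀.2⟩, hφs⟩).not_gt hs.2

lemma volterraConv_mul_le_of_logConvex {k φ : ℝ → ℝ} {t t₀ : ℝ} (ht : t ∈ Ioo 0 t₀)
    (hk_log : ∀ s ∈ Ioo 0 t, k (t₀ - s) * k t ≤ k (t - s) * k t₀)
    (hφ_nonneg : ∀ s ∈ Ioo 0 t, 0 ≤ φ s)
    (hint : IntervalIntegrable (fun s => φ s * k (t - s)) volume 0 t)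
    (hint₀ : IntervalIntegrable (fun s => φ s * k (t₀ - s)) volume 0 t₀) :
    volterraConv φ k t₀ * k t
      ≤ volterraConv φ k t * k t₀ + (∫ s in t..t₀, φ s * k (t₀ - s)) * k t := by
  have hint_left : IntervalIntegrable (fun s => φ s * k (t₀ - s)) volume 0 t :=
    hint₀.mono_set (uIcc_subset_uIcc_left (by simp [mem_uIcc, ht.1.le, ht.2.le]))
  have hint_right : IntervalIntegrable (fun s => φ s * k (t₀ - s)) volume t t₀ :=
    hint₀.mono_set (uIcc_subset_uIcc_right (by simp [mem_uIcc, ht.1.le, ht.2.le]))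
  have hleft : (∫ s in (0 : ℝ)..t, φ s * k (t₀ - s)) * k t ≤ volterraConv φ k t * k t₀ := by
    rw [volterraConv, ← intervalIntegral.integral_mul_const, ← intervalIntegral.integral_mul_const]
    refine intervalIntegral.integral_mono_on_of_le_Ioo ht.1.le (hint_left.mul_const _)
      (hint.mul_const _) fun s hs => ?_
    rw [mul_assoc, mul_assoc]
    exact mul_le_mul_of_nonneg_left (hk_log s hs) (hφ_nonneg s hs)
  rw [volterraConv, ← intervalIntegral.integral_add_adjacent_intervals hint_left hint_right,
    add_mul]
  gcongr

lemma exists_forall_integral_mul_lt {k : ℝ → ℝ} {t₀ : ℝ} (ht₀ : 0 < t₀) (hkt₀ : 0 < k t₀)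
    (hk_cont : ContinuousAt k t₀) (hk_int : ∀ a b, IntervalIntegrable k volume a b) :
    ∃ c ∈ Ioo 0 t₀, ∀ t ∈ Icc c t₀, (∫ s in t..t₀, k (t₀ - s)) * k t < k t₀ := by
  have hprim : Continuous fun t => ∫ s in (0 : ℝ)..t₀ - t, k s :=
    (intervalIntegral.continuous_primitive hk_int 0).comp
      (continuous_const.sub continuous_id)
  have hlt : ∀ᶠ t in nhds t₀, (∫ s in (0 : ℝ)..t₀ - t, k s) * k t < k t₀ :=
    (hprim.continuousAt.mul hk_cont).eventually_lt_const (by simpa)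
  obtain ⟨c, hc, hsub⟩ := mem_nhdsLE_iff_exists_Icc_subset.1
    (nhdsWithin_le_nhds (hlt.and (eventually_gt_nhds ht₀)))
  refine ⟨c, ⟨(hsub (left_mem_Icc.2 (le_of_lt hc))).2, hc⟩, fun t ht => ?_⟩
  simpa [intervalIntegral.integral_comp_sub_left] using (hsub ht).1

lemma mul_le_integral_mul_of_nonpos {k φ : ℝ → ℝ} {t t₀ : ℝ} (ht : t ∈ Ioo 0 t₀)
    (hk_nonneg : 0 ≤ k t) (hk_log : ∀ s ∈ Ioo 0 t, k (t₀ - s) * k t ≤ k (t - s) * k t₀)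
    (hφ_nonneg : ∀ s ∈ Ioo 0 t, 0 ≤ φ s) (hφt₀ : φ t₀ ≤ 0)
    (hint : ∀ u > 0, IntervalIntegrable (fun s => φ s * k (u - s)) volume 0 u)
    (hres : ∀ u > 0, φ u = k u - volterraConv φ k u) :
    φ t * k t₀ ≤ (∫ s in t..t₀, φ s * k (t₀ - s)) * k t := by
  have ht₀ : 0 < t₀ := ht.1.trans ht.2
  have hconv := volterraConv_mul_le_of_logConvex ht hk_log hφ_nonneg (hint t ht.1) (hint t₀ ht₀)
  have hkt₀ : k t₀ * k t ≤ volterraConv φ k t₀ * k t :=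
    mul_le_mul_of_nonneg_right (by linarith [hres t₀ ht₀]) hk_nonneg
  rw [hres t ht.1]
  linarith

-- At a first nonpositive point `t₀` of `φ`, log-convexity of `k` bounds `φ t * k t₀` for `t < t₀`
-- by the part of the convolution over `[t, t₀]`. If `t` maximises `φ` on a short interval ending
-- at `t₀`, that part is too small, since `k` has little mass near `0`.
theorem pos_of_eq_sub_volterraConv {k φ : ℝ → ℝ} (hk_pos : ∀ t > 0, 0 < k t)
    (hk_cont : ContinuousOn k (Ioi 0)) (hk_int : ∀ a b, IntervalIntegrable k volume a b)
    (hk_log : ∀ s > 0, ∀ t > s, ∀ t₀ > t, k (t₀ - s) * k t ≤ k (t - s) * k t₀)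
    (hφ_cont : ContinuousOn φ (Ioi 0)) (hφ_pos : ∀ᶠ t in nhdsWithin 0 (Ioi 0), 0 < φ t)
    (hint : ∀ t > 0, IntervalIntegrable (fun s => φ s * k (t - s)) volume 0 t)
    (hres : ∀ t > 0, φ t = k t - volterraConv φ k t) :
    ∀ t > 0, 0 < φ t := by
  by_contra! ⟨t₁, ht₁, hφt₁⟩
  obtain ⟨t₀, ht₀, hφt₀, hφ_before⟩ := exists_first_nonpos hφ_cont hφ_pos ht₁ hφt₁
  obtain ⟨c, hc, hc_lt⟩ := exists_forall_integral_mul_lt ht₀ (hk_pos t₀ ht₀)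
    (hk_cont.continuousAt (Ioi_mem_nhds ht₀)) hk_int
  obtain ⟨t, ht, hmax⟩ := isCompact_Icc.exists_isMaxOn (nonempty_Icc.2 hc.2.le)
    (hφ_cont.mono fun s hs => lt_of_lt_of_le hc.1 hs.1)
  have hφt : 0 < φ t := (hφ_before c hc).trans_le (hmax (left_mem_Icc.2 hc.2.le))
  have htt₀ : t ∈ Ioo 0 t₀ :=
    ⟨hc.1.trans_le ht.1, ht.2.lt_of_ne (by rintro rfl; exact hφt.not_ge hφt₀)⟩
  have hk_sub : IntervalIntegrable (fun s => k (t₀ - s)) volume t t₀ := by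
    simpa using (hk_int (t₀ - t) 0).comp_sub_left t₀
  have htail : ∫ s in t..t₀, φ s * k (t₀ - s) ≤ φ t * ∫ s in t..t₀, k (t₀ - s) := by
    rw [← intervalIntegral.integral_const_mul]
    refine intervalIntegral.integral_mono_on_of_le_Ioo htt₀.2.le
      ((hint t₀ ht₀).mono_set (uIcc_subset_uIcc_right (by simp [mem_uIcc, htt₀.1.le, htt₀.2.le])))
      (hk_sub.const_mul _) fun s hs => ?_
    exact mul_le_mul_of_nonneg_right (hmax ⟨ht.1.trans hs.1.le, hs.2.le⟩)
      (hk_pos _ (sub_pos.2 hs.2)).le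
  have hk_t := hk_pos t htt₀.1
  refine lt_irrefl (φ t * k t₀) ?_
  calc φ t * k t₀ ≤ (∫ s in t..t₀, φ s * k (t₀ - s)) * k t :=
        mul_le_integral_mul_of_nonpos htt₀ hk_t.le
          (fun s hs => hk_log s hs.1 t hs.2 t₀ htt₀.2)
          (fun s hs => (hφ_before s ⟨hs.1, hs.2.trans htt₀.2⟩).le) hφt₀ hint hres
    _ ≤ φ t * ((∫ s in t..t₀, k (t₀ - s)) * k t) := by
        rw [← mul_assoc]
        gcongr
    _ < φ t * k t₀ := mul_lt_mul_of_pos_left (hc_lt t ht) hφt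

/-! ### The Mittag-Leffler function -/

lemma rpow_sub_one_mul_exp_neg_le_Gamma {M s : ℝ} (hM : 0 ≤ M) (hs : 1 ≤ s) :
    M ^ (s - 1) * exp (-M) ≤ Gamma s := by
  have hconv := GammaIntegral_convergent (s := s) (by linarith)
  calc M ^ (s - 1) * exp (-M) = ∫ x in Ioi M, exp (-x) * M ^ (s - 1) := by
        rw [integral_mul_const, integral_exp_neg_Ioi, mul_comm]
    _ ≤ ∫ x in Ioi M, exp (-x) * x ^ (s - 1) := by
        refine setIntegral_mono_on ((integrableOn_exp_neg_Ioi M).mul_const _)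
          (hconv.mono_set (Ioi_subset_Ioi hM)) measurableSet_Ioi fun x hx => ?_
        have : M ≤ x := le_of_lt hx
        have : 0 ≤ s - 1 := by linarith
        gcongr
    _ ≤ ∫ x in Ioi 0, exp (-x) * x ^ (s - 1) := by
        refine setIntegral_mono_set hconv ?_ (Ioi_subset_Ioi hM).eventuallyLE
        filter_upwards [ae_restrict_mem measurableSet_Ioi] with x hx
        exact mul_nonneg (exp_pos _).le (rpow_nonneg (le_of_lt hx) _)
    _ = Gamma s := (Gamma_eq_integral (by linarith)).symm

lemma summable_pow_div_Gamma {a : ℝ} (ha : 0 < a) (κ z : ℝ) :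
    Summable fun k : ℕ => z ^ k / Gamma (κ + k * a) := by
  set M : ℝ := (|z| + 1) ^ a⁻¹
  have hM : 0 < M := by positivity
  have hMa : M ^ a = |z| + 1 := rpow_inv_rpow (by positivity) ha.ne'
  have hratio : |z| / (|z| + 1) < 1 := by
    rw [div_lt_one (by positivity)]
    exact lt_add_one _
  refine Summable.of_norm_bounded_eventually_nat
    ((summable_geometric_of_lt_one (by positivity) hratio).mul_right
      (M ^ (κ - 1) * exp (-M))⁻¹) ?_
  have hlarge : ∀ᶠ k : ℕ in atTop, 1 ≤ κ + k * a :=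
    (tendsto_atTop_add_const_left _ κ
      (tendsto_natCast_atTop_atTop.atTop_mul_const ha)).eventually_ge_atTop 1
  filter_upwards [hlarge] with k hk
  have hpow : M ^ (κ + k * a - 1) = M ^ (κ - 1) * (|z| + 1) ^ k := by
    rw [show κ + k * a - 1 = κ - 1 + a * k by ring, rpow_add hM, rpow_mul hM.le, hMa,
      rpow_natCast]
  have hGamma : 0 < Gamma (κ + k * a) := Gamma_pos_of_pos (by linarith)
  calc ‖z ^ k / Gamma (κ + k * a)‖ = |z| ^ k / Gamma (κ + k * a) := by
        rw [norm_div, norm_pow, norm_of_nonneg hGamma.le, norm_eq_abs]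
    _ ≤ |z| ^ k / (M ^ (κ + k * a - 1) * exp (-M)) := by
        gcongr
        exact rpow_sub_one_mul_exp_neg_le_Gamma hM.le hk
    _ = (|z| / (|z| + 1)) ^ k * (M ^ (κ - 1) * exp (-M))⁻¹ := by
        rw [hpow, div_pow]
        field_simp

lemma continuous_mittagLeffler {a : ℝ} (ha : 0 < a) (κ : ℝ) : Continuous (mittagLeffler a κ) := by
  refine continuous_iff_continuousAt.2 fun z => ?_
  have hball : ContinuousOn (mittagLeffler a κ) (Metric.ball 0 (|z| + 1)) := by
    refine continuousOn_tsum (fun k => by fun_prop)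
      (summable_pow_div_Gamma ha κ (|z| + 1)).norm fun k x hx => ?_
    rw [norm_div, norm_div, norm_pow, norm_pow]
    gcongr
    exact (mem_ball_zero_iff.1 hx).le.trans (le_abs_self _)
  exact hball.continuousAt (Metric.isOpen_ball.mem_nhds (mem_ball_zero_iff.2 (lt_add_one |z|)))

lemma mittagLeffler_eq_add {a : ℝ} (ha : 0 < a) (κ z : ℝ) :
    mittagLeffler a κ z = 1 / Gamma κ + z * mittagLeffler a (κ + a) z := by
  rw [mittagLeffler, (summable_pow_div_Gamma ha κ z).tsum_eq_zero_add, mittagLeffler,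
    ← tsum_mul_left]
  congr 1
  · simp
  · refine tsum_congr fun k => ?_
    rw [pow_succ', mul_div_assoc, Nat.cast_add_one,
      show κ + ((k : ℝ) + 1) * a = κ + a + k * a by ring]

/-! ### Power kernels -/

/-- The Riemann-Liouville kernel `t^(μ-1)/Γ(μ)`, convolution with which is the fractional integral
of order `μ`. -/
noncomputable def riemannLiouvilleKernel (μ t : ℝ) : ℝ := t ^ (μ - 1) / Gamma μ

lemma riemannLiouvilleKernel_pos {μ t : ℝ} (hμ : 0 < μ) (ht : 0 < t) :
    0 < riemannLiouvilleKernel μ t := by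
  unfold riemannLiouvilleKernel
  positivity

lemma continuousOn_riemannLiouvilleKernel (μ : ℝ) :
    ContinuousOn (riemannLiouvilleKernel μ) (Ioi 0) :=
  (continuousOn_id.rpow_const fun _ ht => Or.inl (ne_of_gt ht)).div_const _

lemma riemannLiouvilleKernel_mul_le_mul {μ s t t₀ : ℝ} (hμ : μ ≤ 1) (hs : 0 ≤ s) (hst : s < t)
    (htt₀ : t ≤ t₀) :
    riemannLiouvilleKernel μ (t₀ - s) * riemannLiouvilleKernel μ t
      ≤ riemannLiouvilleKernel μ (t - s) * riemannLiouvilleKernel μ t₀ := by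
  have ht₀ : 0 ≤ t₀ := by linarith
  simp only [riemannLiouvilleKernel, div_mul_div_comm]
  rw [← mul_rpow (by linarith) (by linarith), ← mul_rpow (by linarith) ht₀]
  refine div_le_div_of_nonneg_right ?_ (mul_self_nonneg _)
  exact rpow_le_rpow_of_nonpos (mul_pos (by linarith) (by linarith)) (by nlinarith) (by linarith)

lemma locallyIntegrable_riemannLiouvilleKernel {μ : ℝ} (hμ : 0 < μ) :
    LocallyIntegrable (riemannLiouvilleKernel μ) := by
  refine locallyIntegrable_of_norm_le_rpow (C := |(Gamma μ)⁻¹|) (α := 1 - μ) (by simp) (by simpa)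
    (ae_of_all _ fun t => ?_) (by unfold riemannLiouvilleKernel; fun_prop)
  rw [riemannLiouvilleKernel, div_eq_inv_mul, norm_mul, neg_sub]
  exact mul_le_mul_of_nonneg_left (abs_rpow_le_abs_rpow t _) (abs_nonneg _)

lemma integral_riemannLiouvilleKernel {μ : ℝ} (hμ : 0 < μ) (t : ℝ) :
    ∫ s in (0 : ℝ)..t, riemannLiouvilleKernel μ s = riemannLiouvilleKernel (μ + 1) t := by
  simp only [riemannLiouvilleKernel]
  rw [intervalIntegral.integral_div, integral_rpow (Or.inl (by linarith)), sub_add_cancel,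
    zero_rpow hμ.ne', Gamma_add_one hμ.ne', add_sub_cancel_right, sub_zero, div_div]

lemma integral_exp_neg_mul_riemannLiouvilleKernel {μ l : ℝ} (hμ : 0 < μ) (hl : 0 < l) :
    ∫ t in Ioi (0 : ℝ), exp (-l * t) * riemannLiouvilleKernel μ t = 1 / l ^ μ := by
  calc ∫ t in Ioi (0 : ℝ), exp (-l * t) * riemannLiouvilleKernel μ t
      = ∫ t in Ioi (0 : ℝ), t ^ (μ - 1) * exp (-(l * t)) / Gamma μ := by
        refine setIntegral_congr_fun measurableSet_Ioi fun t _ => ?_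
        simp only [riemannLiouvilleKernel, neg_mul]
        ring
    _ = (1 / l) ^ μ := by
        rw [integral_div, integral_rpow_mul_exp_neg_mul_Ioi hμ hl,
          mul_div_cancel_right₀ _ (Gamma_pos_of_pos hμ).ne']
    _ = 1 / l ^ μ := by rw [div_rpow zero_le_one hl.le, one_rpow]

lemma integrableOn_exp_neg_mul_riemannLiouvilleKernel {μ l : ℝ} (hμ : 0 < μ) (hl : 0 < l) :
    IntegrableOn (fun t => exp (-l * t) * riemannLiouvilleKernel μ t) (Ioi 0) := by
  refine Integrable.of_integral_ne_zero ?_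
  rw [integral_exp_neg_mul_riemannLiouvilleKernel hμ hl]
  positivity

lemma integral_rpow_mul_sub_rpow {a b t : ℝ} (ha : 0 < a) (hb : 0 < b) (ht : 0 < t) :
    ∫ s in (0 : ℝ)..t, s ^ (a - 1) * (t - s) ^ (b - 1)
      = t ^ (a + b - 1) * (Gamma a * Gamma b / Gamma (a + b)) := by
  have hbeta := Complex.betaIntegral_scaled a b ht
  rw [Complex.betaIntegral_eq_Gamma_mul_div _ _ (by simpa) (by simpa)] at hbeta
  apply Complex.ofReal_injective
  calc ((∫ s in (0 : ℝ)..t, s ^ (a - 1) * (t - s) ^ (b - 1) : ℝ) : ℂ)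
      = ∫ s in (0 : ℝ)..t, (s : ℂ) ^ ((a : ℂ) - 1) * ((t : ℂ) - s) ^ ((b : ℂ) - 1) := by
        rw [← intervalIntegral.integral_ofReal]
        refine intervalIntegral.integral_congr fun s hs => ?_
        rw [uIcc_of_le ht.le] at hs
        push_cast [Complex.ofReal_cpow hs.1, Complex.ofReal_cpow (sub_nonneg.2 hs.2)]
        rfl
    _ = ((t ^ (a + b - 1) * (Gamma a * Gamma b / Gamma (a + b)) : ℝ) : ℂ) := by
        rw [hbeta]
        push_cast [Complex.ofReal_cpow ht.le, ← Complex.Gamma_ofReal]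
        rfl

lemma volterraConv_riemannLiouvilleKernel {a b t : ℝ} (ha : 0 < a) (hb : 0 < b) (ht : 0 < t) :
    volterraConv (riemannLiouvilleKernel a) (riemannLiouvilleKernel b) t
      = riemannLiouvilleKernel (a + b) t := by
  have hΓa := (Gamma_pos_of_pos ha).ne'
  have hΓb := (Gamma_pos_of_pos hb).ne'
  simp only [volterraConv, riemannLiouvilleKernel, div_mul_div_comm]
  rw [intervalIntegral.integral_div, integral_rpow_mul_sub_rpow ha hb ht]
  field_simp

lemma intervalIntegrable_riemannLiouvilleKernel_mul {a b t : ℝ} (ha : 0 < a) (hb : 0 < b)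
    (ht : 0 < t) :
    IntervalIntegrable (fun s => riemannLiouvilleKernel a s * riemannLiouvilleKernel b (t - s))
      volume 0 t := by
  by_contra hnot
  have hpos := riemannLiouvilleKernel_pos (add_pos ha hb) ht
  rw [← volterraConv_riemannLiouvilleKernel ha hb ht, volterraConv,
    intervalIntegral.integral_undef hnot] at hpos
  exact hpos.false

/-- The kernel `t^(κ-1) E_{a,κ}(z t^a)`, which convolution with `riemannLiouvilleKernel μ` turns
into the kernel with `κ + μ` in place of `κ`. -/
noncomputable def mittagLefflerKernel (a κ z t : ℝ) : ℝ :=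
  t ^ (κ - 1) * mittagLeffler a κ (z * t ^ a)

lemma hasSum_mittagLefflerKernel {a t : ℝ} (ha : 0 < a) (κ z : ℝ) (ht : 0 < t) :
    HasSum (fun k : ℕ => z ^ k * riemannLiouvilleKernel (κ + k * a) t)
      (mittagLefflerKernel a κ z t) := by
  refine ((summable_pow_div_Gamma ha κ (z * t ^ a)).hasSum.mul_left (t ^ (κ - 1))).congr_fun
    fun k => ?_
  rw [riemannLiouvilleKernel, show κ + k * a - 1 = κ - 1 + a * k by ring, rpow_add ht,
    rpow_mul ht.le, rpow_natCast, mul_pow]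
  ring

lemma mittagLefflerKernel_eq_add {a t : ℝ} (ha : 0 < a) (κ z : ℝ) (ht : 0 < t) :
    mittagLefflerKernel a κ z t
      = riemannLiouvilleKernel κ t + z * mittagLefflerKernel a (κ + a) z t := by
  rw [mittagLefflerKernel, mittagLefflerKernel, mittagLeffler_eq_add ha, riemannLiouvilleKernel,
    show κ + a - 1 = κ - 1 + a by ring, rpow_add ht]
  ring

lemma continuous_mittagLeffler_mul_rpow {a : ℝ} (ha : 0 < a) (κ z : ℝ) :
    Continuous fun t : ℝ => mittagLeffler a κ (z * t ^ a) :=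
  (continuous_mittagLeffler ha κ).comp (continuous_const.mul (continuous_rpow_const ha.le))

lemma mittagLefflerKernel_eq_mul {κ : ℝ} (hκ : 0 < κ) (a z t : ℝ) :
    mittagLefflerKernel a κ z t
      = riemannLiouvilleKernel κ t * (Gamma κ * mittagLeffler a κ (z * t ^ a)) := by
  have := (Gamma_pos_of_pos hκ).ne'
  rw [mittagLefflerKernel, riemannLiouvilleKernel]
  field_simp

lemma locallyIntegrable_mittagLefflerKernel {a κ : ℝ} (ha : 0 < a) (hκ : 0 < κ) (z : ℝ) :
    LocallyIntegrable (mittagLefflerKernel a κ z) :=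
  ((locallyIntegrable_riemannLiouvilleKernel hκ).mul_continuous
    ((continuous_mittagLeffler_mul_rpow ha κ z).const_mul (Gamma κ))).congr
      (ae_of_all _ fun t => (mittagLefflerKernel_eq_mul hκ a z t).symm)

lemma intervalIntegrable_mittagLefflerKernel_mul {a κ μ t : ℝ} (ha : 0 < a) (hκ : 0 < κ)
    (hμ : 0 < μ) (z : ℝ) (ht : 0 < t) :
    IntervalIntegrable
      (fun s => mittagLefflerKernel a κ z s * riemannLiouvilleKernel μ (t - s)) volume 0 t := by
  refine ((intervalIntegrable_riemannLiouvilleKernel_mul hκ hμ ht).mul_continuousOn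
    ((continuous_mittagLeffler_mul_rpow ha κ z).const_mul (Gamma κ)).continuousOn).congr
      fun s _ => ?_
  simp only [mittagLefflerKernel_eq_mul hκ]
  ring

lemma volterraConv_mittagLefflerKernel {a κ μ t : ℝ} (ha : 0 < a) (hκ : 0 < κ) (hμ : 0 < μ)
    (z : ℝ) (ht : 0 < t) :
    volterraConv (mittagLefflerKernel a κ z) (riemannLiouvilleKernel μ) t
      = mittagLefflerKernel a (κ + μ) z t := by
  have hκk (k : ℕ) : 0 < κ + k * a := by positivity
  have hterm (z : ℝ) (k : ℕ) :
      volterraConv (fun s => z ^ k * riemannLiouvilleKernel (κ + k * a) s)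
        (riemannLiouvilleKernel μ) t = z ^ k * riemannLiouvilleKernel (κ + μ + k * a) t := by
    rw [volterraConv_const_mul, volterraConv_riemannLiouvilleKernel (hκk k) hμ ht,
      add_right_comm]
  have habs (k : ℕ) :
      volterraConv (fun s => |z ^ k * riemannLiouvilleKernel (κ + k * a) s|)
        (|riemannLiouvilleKernel μ ·|) t
        = |z| ^ k * riemannLiouvilleKernel (κ + μ + k * a) t := by
    rw [← hterm]
    refine volterraConv_congr ht.le (fun s hs => ?_)
      fun s hs => abs_of_pos (riemannLiouvilleKernel_pos hμ hs.1)
    rw [abs_mul, abs_pow, abs_of_pos (riemannLiouvilleKernel_pos (hκk k) hs.1)]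
  have hsum := hasSum_volterraConv (g := riemannLiouvilleKernel μ)
    (f := fun k s => z ^ k * riemannLiouvilleKernel (κ + k * a) s) ht.le
    (fun k => by
      simpa only [mul_assoc] using
        (intervalIntegrable_riemannLiouvilleKernel_mul (hκk k) hμ ht).const_mul (z ^ k))
    (by simpa only [habs] using (hasSum_mittagLefflerKernel ha (κ + μ) |z| ht).summable)
  simp_rw [hterm] at hsum
  rw [(hasSum_mittagLefflerKernel ha (κ + μ) z ht).unique hsum]
  exact volterraConv_congr ht.le
    (fun s hs => (hasSum_mittagLefflerKernel ha κ z hs.1).tsum_eq.symm) fun _ _ => rfl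

/-! ### The Mittag-Leffler density -/

/-- The Mittag-Leffler density `f^{α,β}`, a probability density on the half-line `t > 0`; its
values at `t ≤ 0` are junk. -/
noncomputable def mittagLefflerDensity (α β t : ℝ) : ℝ :=
  β * t ^ (α - 1) * mittagLeffler α α (-(β * t ^ α))

lemma mittagLefflerDensity_eq (α β t : ℝ) :
    mittagLefflerDensity α β t = β * mittagLefflerKernel α α (-β) t := by
  rw [mittagLefflerDensity, mittagLefflerKernel, neg_mul, mul_assoc]

lemma locallyIntegrable_mittagLefflerDensity {α : ℝ} (hα : 0 < α) (β : ℝ) :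
    LocallyIntegrable (mittagLefflerDensity α β) :=
  ((locallyIntegrable_mittagLefflerKernel hα hα (-β)).smul β).congr
    (ae_of_all _ fun t => (mittagLefflerDensity_eq α β t).symm)

lemma continuousOn_mittagLefflerDensity {α : ℝ} (hα : 0 < α) (β : ℝ) :
    ContinuousOn (mittagLefflerDensity α β) (Ioi 0) :=
  (continuousOn_const.mul
    (continuousOn_id.rpow_const fun _ ht => Or.inl (ne_of_gt ht))).mul <| by
      simpa only [neg_mul] using (continuous_mittagLeffler_mul_rpow hα α (-β)).continuousOn

lemma eventually_mittagLefflerDensity_pos {α β : ℝ} (hα : 0 < α) (hβ : 0 < β) :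
    ∀ᶠ t in nhdsWithin 0 (Ioi 0), 0 < mittagLefflerDensity α β t := by
  have hzero : 0 < mittagLeffler α α (-β * 0 ^ α) := by
    rw [zero_rpow hα.ne', mul_zero, mittagLeffler_eq_add hα, zero_mul, add_zero, one_div, inv_pos]
    exact Gamma_pos_of_pos hα
  filter_upwards [self_mem_nhdsWithin, nhdsWithin_le_nhds
    ((continuous_mittagLeffler_mul_rpow hα α (-β)).continuousAt.eventually_const_lt hzero)]
    with t ht hE
  rw [mittagLefflerDensity_eq, mittagLefflerKernel]
  exact mul_pos hβ (mul_pos (rpow_pos_of_pos ht _) hE)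

lemma mittagLefflerDensity_eq_sub_volterraConv {α t : ℝ} (hα : 0 < α) (β : ℝ) (ht : 0 < t) :
    mittagLefflerDensity α β t = β * riemannLiouvilleKernel α t
      - volterraConv (mittagLefflerDensity α β) (fun s => β * riemannLiouvilleKernel α s) t := by
  have hconv : volterraConv (mittagLefflerDensity α β) (fun s => β * riemannLiouvilleKernel α s) t
      = β * β * mittagLefflerKernel α (α + α) (-β) t := by
    rw [← volterraConv_mittagLefflerKernel hα hα hα _ ht, volterraConv, volterraConv,
      ← intervalIntegral.integral_const_mul]
    simp only [mittagLefflerDensity_eq, mul_mul_mul_comm]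
  rw [hconv, mittagLefflerDensity_eq, mittagLefflerKernel_eq_add hα α (-β) ht]
  ring

lemma mittagLefflerDensity_pos {α β t : ℝ} (hα : 0 < α) (hα₁ : α ≤ 1) (hβ : 0 < β) (ht : 0 < t) :
    0 < mittagLefflerDensity α β t := by
  refine pos_of_eq_sub_volterraConv (k := fun s => β * riemannLiouvilleKernel α s)
    (fun s hs => mul_pos hβ (riemannLiouvilleKernel_pos hα hs))
    ((continuousOn_riemannLiouvilleKernel α).const_mul β)
    (fun a b => ((locallyIntegrable_riemannLiouvilleKernel hα).integrableOn_isCompact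
      isCompact_uIcc).intervalIntegrable.const_mul β)
    (fun s hs u hsu t₀ hut₀ => ?_) (continuousOn_mittagLefflerDensity hα β)
    (eventually_mittagLefflerDensity_pos hα hβ)
    (fun u hu => ?_) (fun u hu => mittagLefflerDensity_eq_sub_volterraConv hα β hu) t ht
  · have hlog := mul_le_mul_of_nonneg_left
      (riemannLiouvilleKernel_mul_le_mul hα₁ hs.le hsu hut₀.le) (mul_self_nonneg β)
    rwa [mul_mul_mul_comm, mul_mul_mul_comm β β] at hlog
  · simp only [mittagLefflerDensity_eq, mul_mul_mul_comm β]
    exact (intervalIntegrable_mittagLefflerKernel_mul hα hα hα _ hu).const_mul _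

lemma mittagLefflerDensity_le {α β t : ℝ} (hα : 0 < α) (hα₁ : α ≤ 1) (hβ : 0 < β) (ht : 0 < t) :
    mittagLefflerDensity α β t ≤ β * riemannLiouvilleKernel α t := by
  rw [mittagLefflerDensity_eq_sub_volterraConv hα β ht]
  exact sub_le_self _ <| volterraConv_nonneg ht.le
    (fun s hs => (mittagLefflerDensity_pos hα hα₁ hβ hs.1).le)
    (fun s hs => (mul_pos hβ (riemannLiouvilleKernel_pos hα hs.1)).le)

lemma integrableOn_exp_neg_mul_mittagLefflerDensity {α β l : ℝ} (hα : 0 < α) (hα₁ : α ≤ 1)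
    (hβ : 0 < β) (hl : 0 < l) :
    IntegrableOn (fun t => exp (-l * t) * mittagLefflerDensity α β t) (Ioi 0) := by
  have hmeas : AEStronglyMeasurable (fun t => exp (-l * t) * mittagLefflerDensity α β t)
      (volume.restrict (Ioi 0)) :=
    ((by fun_prop : Continuous fun t : ℝ => exp (-l * t)).continuousOn.mul
      (continuousOn_mittagLefflerDensity hα β)).aestronglyMeasurable measurableSet_Ioi
  refine ((integrableOn_exp_neg_mul_riemannLiouvilleKernel hα hl).const_mul β).mono' hmeas ?_
  filter_upwards [ae_restrict_mem measurableSet_Ioi] with t ht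
  rw [norm_of_nonneg (mul_pos (exp_pos _) (mittagLefflerDensity_pos hα hα₁ hβ ht)).le,
    mul_left_comm]
  exact mul_le_mul_of_nonneg_left (mittagLefflerDensity_le hα hα₁ hβ ht) (exp_pos _).le

lemma integral_exp_neg_mul_mittagLefflerDensity {α l : ℝ} (hα : 0 < α) (β : ℝ) (hl : 0 < l)
    (hint : IntegrableOn (fun t => exp (-l * t) * mittagLefflerDensity α β t) (Ioi 0)) :
    ∫ t in Ioi 0, exp (-l * t) * mittagLefflerDensity α β t = β / (β + l ^ α) := by
  have hlα : 0 < l ^ α := rpow_pos_of_pos hl α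
  have hk_int := (integrableOn_exp_neg_mul_riemannLiouvilleKernel hα hl).const_mul β
  have hk : ∫ t in Ioi 0, exp (-l * t) * (β * riemannLiouvilleKernel α t) = β / l ^ α := by
    simp_rw [mul_left_comm _ β]
    rw [integral_const_mul, integral_exp_neg_mul_riemannLiouvilleKernel hα hl, mul_one_div]
  simp_rw [mul_left_comm β] at hk_int
  have hprod := integral_exp_neg_mul_of_eq_sub_volterraConv hint hk_int
    fun t ht => mittagLefflerDensity_eq_sub_volterraConv hα β ht
  rw [hk] at hprod
  generalize ∫ t in Ioi 0, exp (-l * t) * mittagLefflerDensity α β t = I at hprod ⊢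
  field_simp at hprod
  have hne : β + l ^ α ≠ 0 := fun h0 => by
    rw [add_comm, h0, mul_zero] at hprod
    linarith
  rw [eq_div_iff hne, add_comm, hprod]

lemma resolvent_mittagLefflerDensity_ae_eq {α : ℝ} (hα : 0 < α) (β : ℝ) {R : ℝ → ℝ}
    (hR : LocallyIntegrableOn R (Ici 0))
    (hres : ∀ᵐ t ∂volume.restrict (Ioi 0),
      R t = mittagLefflerDensity α β t + volterraConv (mittagLefflerDensity α β) R t) :
    R =ᵐ[volume.restrict (Ioi 0)] fun t => β * riemannLiouvilleKernel α t := by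
  refine ae_eq_of_eq_add_volterraConv
    ((locallyIntegrable_mittagLefflerDensity hα β).locallyIntegrableOn _) hR
    (((locallyIntegrable_riemannLiouvilleKernel hα).smul β).locallyIntegrableOn _) hres ?_
  filter_upwards [ae_restrict_mem measurableSet_Ioi] with t ht
  rw [mittagLefflerDensity_eq_sub_volterraConv hα β ht, sub_add_cancel]

lemma integral_of_ae_eq_riemannLiouvilleKernel {α β t : ℝ} (hα : 0 < α) {R : ℝ → ℝ}
    (hR : R =ᵐ[volume.restrict (Ioi 0)] fun t => β * riemannLiouvilleKernel α t) (ht : 0 ≤ t) :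
    ∫ s in (0 : ℝ)..t, R s = β * riemannLiouvilleKernel (α + 1) t := by
  rw [← integral_riemannLiouvilleKernel hα, ← intervalIntegral.integral_const_mul,
    intervalIntegral.integral_of_le ht, intervalIntegral.integral_of_le ht]
  exact integral_congr_ae (ae_restrict_of_ae_restrict_of_subset Ioc_subset_Ioi_self hR)

theorem mittag_leffler_resolvent_general (α β : ℝ) (hα : 0 < α) (φ R : ℝ → ℝ)
    (hφ : ∀ t > (0 : ℝ), φ t = β * t ^ (α - 1) * mittagLeffler α α (-(β * t ^ α)))
    (hR_loc : LocallyIntegrableOn R (Set.Ici 0))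
    (hres : ∀ᵐ t ∂volume.restrict (Ioi 0), R t = φ t + ∫ s in (0 : ℝ)..t, R (t - s) * φ s) :
    (∀ l > (0 : ℝ), IntegrableOn (fun t => exp (-l * t) * φ t) (Ioi 0) →
      (∫ t in Set.Ioi (0 : ℝ), Real.exp (-l * t) * φ t) = β / (β + l ^ α))
    ∧ (∀ t ≥ (0 : ℝ), (∫ s in (0 : ℝ)..t, R s) = β * t ^ α / Real.Gamma (α + 1))
    ∧ (∀ t ≥ (0 : ℝ), (∫ s in (0 : ℝ)..t, ∫ r in (0 : ℝ)..s, R r)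
          = β * t ^ (α + 1) / Real.Gamma (α + 2)) := by
  have hφ_eq : ∀ t > 0, mittagLefflerDensity α β t = φ t := fun t ht => (hφ t ht).symm
  have hRk := resolvent_mittagLefflerDensity_ae_eq hα β hR_loc <| by
    filter_upwards [hres, ae_restrict_mem measurableSet_Ioi] with t ht ht₀
    rw [ht, hφ_eq t ht₀, volterraConv_congr (le_of_lt ht₀) (fun s hs => hφ_eq s hs.1)
      fun _ _ => rfl]
    simp only [volterraConv, mul_comm (φ _)]
  have hint : ∀ t ≥ 0, ∫ s in (0 : ℝ)..t, R s = β * riemannLiouvilleKernel (α + 1) t :=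
    fun t ht => integral_of_ae_eq_riemannLiouvilleKernel hα hRk ht
  refine ⟨fun l hl hφl => ?_, fun t ht => ?_, fun t ht => ?_⟩
  · have hcongr : EqOn (fun t => exp (-l * t) * φ t)
        (fun t => exp (-l * t) * mittagLefflerDensity α β t) (Ioi 0) :=
      fun t ht => congrArg _ (hφ_eq t ht).symm
    rw [setIntegral_congr_fun measurableSet_Ioi hcongr]
    exact integral_exp_neg_mul_mittagLefflerDensity hα β hl
      (hφl.congr_fun hcongr measurableSet_Ioi)
  · rw [hint t ht, riemannLiouvilleKernel, add_sub_cancel_right, mul_div_assoc]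
  · have hcongr : EqOn (fun s => ∫ r in (0 : ℝ)..s, R r)
        (fun s => β * riemannLiouvilleKernel (α + 1) s) (uIcc 0 t) :=
      fun s hs => hint s (uIcc_of_le ht ▸ hs).1
    rw [intervalIntegral.integral_congr hcongr, intervalIntegral.integral_const_mul,
      integral_riemannLiouvilleKernel (by linarith), riemannLiouvilleKernel, add_sub_cancel_right,
      mul_div_assoc, add_assoc, one_add_one_eq_two]

/-- For the Mittag-Leffler kernel `φ = f^{α,β}`, with Laplace transform
`β/(β+λ^α)`, the resolvent `R` satisfies `∫₀^t R = βt^α/Γ(α+1)` and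
`∫₀^t∫₀^s R = βt^{α+1}/Γ(α+2)`. -/
theorem mittag_leffler_resolvent
    (α β : ℝ) (hα : α ∈ Set.Ioo (0:ℝ) 1) (hβ : 0 < β)
    (φ R : ℝ → ℝ)
    (hφ : ∀ t > (0:ℝ), φ t = β * t ^ (α - 1) * mittagLeffler α α (-(β * t ^ α)))
    (hR_nonneg : ∀ t, 0 ≤ R t)
    (hR_loc : LocallyIntegrableOn R (Set.Ici 0))
    (hres : ∀ t ≥ (0:ℝ), R t = φ t + ∫ s in (0:ℝ)..t, R (t - s) * φ s) :
    (∀ l > (0:ℝ), (∫ t in Set.Ioi (0:ℝ), Real.exp (-l * t) * φ t) = β / (β + l ^ α))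
    ∧ (∀ t ≥ (0:ℝ), (∫ s in (0:ℝ)..t, R s) = β * t ^ α / Real.Gamma (α + 1))
    ∧ (∀ t ≥ (0:ℝ), (∫ s in (0:ℝ)..t, ∫ r in (0:ℝ)..s, R r)
          = β * t ^ (α + 1) / Real.Gamma (α + 2)) := by
  obtain ⟨hlaplace, hR⟩ := mittag_leffler_resolvent_general α β hα.1 φ R hφ hR_loc <|
    ae_restrict_of_forall_mem measurableSet_Ioi fun t ht => hres t (le_of_lt ht)
  refine ⟨fun l hl => hlaplace l hl ?_, hR⟩
  exact (integrableOn_exp_neg_mul_mittagLefflerDensity hα.1 hα.2.le hβ hl).congr_fun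
    (fun t ht => congrArg _ (hφ t ht).symm) measurableSet_Ioi
end
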